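/- Define f : ℕ → ℕ by f(w) = ⌈w/2⌉ + 1. Then for every w ≥ 1 and every n ≥ Nat.clog 2 w + 1 (i.e. n at least one more than the ceiling of the base-2 logarithm of w), the n-th iterate satisfies f^[n](w) ∈ {2, 3}. -/

import Mathlib

/-- The causal-cone width-update function of a binary MERA: `f(w) = ⌈w/2⌉ + 1`. -/
noncomputable def widthStep (w : ℕ) : ℕ := ⌈(w : ℚ) / 2⌉₊ + 1

theorem widthStep_eq (w : ℕ) : widthStep w = (w + 1) / 2 + 1 := by
  unfold widthStep
  congr 1
  apply le_antisymm
  · rw [Nat.ceil_le, div_le_iff₀ (by norm_num)]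
    have : w ≤ (w + 1) / 2 * 2 := by omega
    exact_mod_cast this
  · have h := Nat.le_ceil ((w : ℚ) / 2)
    rw [div_le_iff₀ (by norm_num)] at h
    have h2 : w ≤ ⌈(w : ℚ) / 2⌉₊ * 2 := by exact_mod_cast h
    omega

theorem widthStep_aux (n : ℕ) : ∀ k w : ℕ, 1 ≤ w → w ≤ 2 ^ k + 2 → k ≤ n →
    1 ≤ widthStep^[n] w ∧ widthStep^[n] w ≤ 3 := by
  induction n with
  | zero =>
    intro k w h1 h2 h3
    obtain rfl : k = 0 := by omega
    simp at h2 ⊢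
    omega
  | succ n ih =>
    intro k w h1 h2 h3
    rw [Function.iterate_succ_apply]
    apply ih (k - 1)
    · rw [widthStep_eq]; omega
    · rw [widthStep_eq]
      cases k with
      | zero => simp at h2 ⊢; omega
      | succ k => rw [pow_succ] at h2; simp only [Nat.add_sub_cancel]; omega
    · omega

/-- After at least `⌈log₂ w⌉ + 1` coarse-graining steps, the causal cone of a region of
`w ≥ 1` sites in a binary MERA has width 2 or 3. -/
theorem widthStep_iterate_mem (w : ℕ) (hw : 1 ≤ w) (n : ℕ) (hn : Nat.clog 2 w + 1 ≤ n) :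
    widthStep^[n] w ∈ ({2, 3} : Set ℕ) := by
  obtain ⟨m, rfl⟩ : ∃ m, n = m + 1 := ⟨n - 1, by omega⟩
  have hc : w ≤ 2 ^ Nat.clog 2 w := Nat.le_pow_clog (by norm_num) w
  have h := widthStep_aux m (Nat.clog 2 w) w hw (by omega) (by omega)
  rw [Function.iterate_succ_apply', widthStep_eq]
  simp only [Set.mem_insert_iff, Set.mem_singleton_iff]
  omega
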